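/- In U, for every positive integer l one has u₁u₃^l = q^{−2l}u₃^l u₁ + (q^{−4l+2} − q^{−2l+2})u₃^{l−1}u₂². -/

import Mathlib

noncomputable section

abbrev F : Type := RatFunc ℚ

/-- The deformation parameter `q`. -/
def qq : F := RatFunc.X

/-- The quantum integer `[3] = q² + 1 + q⁻²`. -/
def box3 : F := qq ^ 2 + 1 + (qq⁻¹) ^ 2

/-- The generators `E₁, E₂` of the free algebra. -/
def gen (i : Fin 2) : FreeAlgebra F (Fin 2) := FreeAlgebra.ι F i

/-- The quantized Serre relations. -/
inductive SerreRel : FreeAlgebra F (Fin 2) → FreeAlgebra F (Fin 2) → Prop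
  | rel1 : SerreRel
      (gen 0 ^ 3 * gen 1 - box3 • (gen 0 ^ 2 * gen 1 * gen 0)
        + box3 • (gen 0 * gen 1 * gen 0 ^ 2) - gen 1 * gen 0 ^ 3) 0
  | rel2 : SerreRel
      (gen 1 ^ 3 * gen 0 - box3 • (gen 1 ^ 2 * gen 0 * gen 1)
        + box3 • (gen 1 * gen 0 * gen 1 ^ 2) - gen 0 * gen 1 ^ 3) 0

/-- `U = U_q(𝔫)`, the free algebra on `E₁, E₂` modulo the quantized Serre relations. -/
abbrev U : Type := RingQuot SerreRel

def E1 : U := RingQuot.mkAlgHom F SerreRel (gen 0)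
def E2 : U := RingQuot.mkAlgHom F SerreRel (gen 1)

/-- `A = (1/(q+q⁻¹))(E₂E₁ − q⁻²E₁E₂)`. -/
def Aelt : U := (qq + qq⁻¹)⁻¹ • (E2 * E1 - (qq⁻¹) ^ 2 • (E1 * E2))

def v0 : U := E1
def v1 : U := Aelt * v0 - v0 * Aelt
def v2 : U := Aelt * v1 - v1 * Aelt
def v3 : U := Aelt * v2 - v2 * Aelt

/-- `uᵢ = (1 − q⁻²)⁻²ⁱ vᵢ`. -/
def u0 : U := v0
def u1 : U := ((1 - (qq⁻¹) ^ 2)⁻¹) ^ 2 • v1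
def u2 : U := ((1 - (qq⁻¹) ^ 2)⁻¹) ^ 4 • v2
def u3 : U := ((1 - (qq⁻¹) ^ 2)⁻¹) ^ 6 • v3

/-- `p₁ = u₃u₁ − q²u₂²`. -/
def p1 : U := u3 * u1 - qq ^ 2 • u2 ^ 2
/-- `p₀ = u₂u₀ − q²u₁²`. -/
def p0 : U := u2 * u0 - qq ^ 2 • u1 ^ 2

set_option linter.unusedSimpArgs false

section helper
variable {K R : Type*} [Field K] [Ring R] [Algebra K R]

theorem hstep (t : K) (ht : t ≠ 0) (hs : t + t⁻¹ ≠ 0) (P Y a b c d : R)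
    (ha : P * a - a * P = b) (hb : P * b - b * P = c) (hc : P * c - c * P = d)
    (ya : Y * a - a * Y = t • (P * b) - t⁻¹ • (b * P))
    (yb : Y * b - b * Y = t • (P * c) - t⁻¹ • (c * P))
    (h : a * b = t⁻¹ • (b * a)) :
    b * c = t⁻¹ • (c * b) := by
  have e1 : a * c = t⁻¹ • (c * a) + (t⁻¹ - 1) • (b * b) := by
    linear_combination (norm := skip) P * h - h * P - ha * b - a * hb
      + t⁻¹ • (hb * a) + t⁻¹ • (b * ha)
    simp only [mul_add, add_mul, mul_sub, sub_mul, mul_assoc, smul_mul_assoc, mul_smul_comm]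
    match_scalars <;> field_simp <;> ring
  have e2 : a * d = t⁻¹ • (d * a) + (2 * t⁻¹ - 1) • (c * b) + (t⁻¹ - 2) • (b * c) := by
    linear_combination (norm := skip) P * e1 - e1 * P - ha * c - a * hc
      + t⁻¹ • (hc * a) + t⁻¹ • (c * ha) + (t⁻¹ - 1) • (hb * b) + (t⁻¹ - 1) • (b * hb)
    simp only [mul_add, add_mul, mul_sub, sub_mul, mul_assoc, smul_mul_assoc, mul_smul_comm]
    match_scalars <;> field_simp <;> ring
  have pb : P * b = b * P + c := by rw [← hb]; abel
  have pc : P * c = c * P + d := by rw [← hc]; abel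
  have pa : P * a = a * P + b := by rw [← ha]; abel
  rw [pb] at ya
  rw [pc] at yb
  have e3 : (t + t⁻¹) • (b * c - t⁻¹ • (c * b)) = 0 := by
    have key : (Y * a - a * Y) * b + a * (Y * b - b * Y)
        = t⁻¹ • ((Y * b - b * Y) * a) + t⁻¹ • (b * (Y * a - a * Y)) := by
      linear_combination (norm := skip) Y * h - h * Y
      simp only [mul_add, add_mul, mul_sub, sub_mul, mul_assoc, smul_mul_assoc, mul_smul_comm]
      match_scalars <;> field_simp <;> ring
    rw [ya, yb] at key
    simp only [mul_add, add_mul, mul_sub, sub_mul, mul_assoc, smul_mul_assoc, mul_smul_comm,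
      pa, pb, smul_add, smul_sub] at key
    have e1P := congrArg (· * P) e1
    simp only [add_mul, mul_assoc, smul_mul_assoc] at e1P
    linear_combination (norm := skip) (-1 : K) • key + t • e2 + (t - t⁻¹) • e1P
    match_scalars <;> field_simp <;> ring
  exact sub_eq_zero.mp ((smul_eq_zero_iff_right hs).mp e3)

theorem hmain (t : K) (ht : t ≠ 0) (hs : t + t⁻¹ ≠ 0) (hs' : 1 + t + t⁻¹ ≠ 0)
    (v w P a b c d : R) (hP : P = w * v - t⁻¹ • (v * w))
    (s1 : v ^ 3 * w - (t + 1 + t⁻¹) • (v ^ 2 * w * v) + (t + 1 + t⁻¹) • (v * w * v ^ 2)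
      - w * v ^ 3 = 0)
    (s2 : w ^ 3 * v - (t + 1 + t⁻¹) • (w ^ 2 * v * w) + (t + 1 + t⁻¹) • (w * v * w ^ 2)
      - v * w ^ 3 = 0)
    (ha : P * v - v * P = a) (hb : P * a - a * P = b) (hc : P * b - b * P = c)
    (hd : P * c - c * P = d) :
    b * c = t⁻¹ • (c * b) ∧ a * c = t⁻¹ • (c * a) + (t⁻¹ - 1) • (b * b) := by
  simp only [pow_succ, pow_zero, one_mul] at s1 s2
  obtain ⟨x, hx⟩ : ∃ x, w * P - P * w = x := ⟨_, rfl⟩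
  have va : v * a = t⁻¹ • (a * v) := by
    rw [← ha, hP]
    linear_combination (norm := skip) t⁻¹ • s1
    simp only [mul_add, add_mul, mul_sub, sub_mul, mul_assoc, smul_mul_assoc, mul_smul_comm]
    match_scalars <;> field_simp <;> ring
  have wx : w * x = t • (x * w) := by
    rw [← hx, hP]
    linear_combination (norm := skip) s2
    simp only [mul_add, add_mul, mul_sub, sub_mul, mul_assoc, smul_mul_assoc, mul_smul_comm]
    match_scalars <;> field_simp <;> ring
  obtain ⟨Y, hY⟩ : ∃ Y, Y = w * a - t⁻¹ • (a * w) := ⟨_, rfl⟩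
  have hY' : Y = x * v - t⁻¹ • (v * x) := by
    have : P * P - P * P = 0 := sub_self _
    nth_rewrite 2 [hP] at this
    nth_rewrite 2 [hP] at this
    rw [hY]
    linear_combination (norm := skip) this - w * ha + t⁻¹ • (ha * w)
      + hx * v - t⁻¹ • (v * hx)
    simp only [mul_add, add_mul, mul_sub, sub_mul, mul_assoc, smul_mul_assoc, mul_smul_comm]
    match_scalars <;> field_simp <;> ring
  have yv : Y * v - v * Y = t • (P * a) - t⁻¹ • (a * P) := by
    rw [hY, hP]
    linear_combination (norm := skip) (-t) • (w * va) + t⁻¹ • (va * w)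
    simp only [mul_add, add_mul, mul_sub, sub_mul, mul_assoc, smul_mul_assoc, mul_smul_comm]
    match_scalars <;> field_simp <;> ring
  have yw : Y * w - w * Y = t⁻¹ • (P * x) - t • (x * P) := by
    rw [hY', hP]
    linear_combination (norm := skip) t⁻¹ ^ 2 • (v * wx) - wx * v
    simp only [mul_add, add_mul, mul_sub, sub_mul, mul_assoc, smul_mul_assoc, mul_smul_comm]
    match_scalars <;> field_simp <;> ring
  have yP : Y * P = P * Y := by
    have e : (1 + t + t⁻¹) • (Y * P - P * Y) = 0 := by
      have key : Y * P - P * Y = (Y * w - w * Y) * v + w * (Y * v - v * Y)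
          - t⁻¹ • ((Y * v - v * Y) * w) - t⁻¹ • (v * (Y * w - w * Y)) := by
        rw [hP]
        simp only [mul_add, add_mul, mul_sub, sub_mul, mul_assoc, smul_mul_assoc, mul_smul_comm]
        match_scalars <;> field_simp <;> ring
      rw [yv, yw] at key
      linear_combination (norm := skip) key - t • (x * ha) + t • (hx * a)
        + t⁻¹ ^ 2 • (ha * x) - t⁻¹ ^ 2 • (a * hx) - t • (P * hY) - t⁻¹ • (P * hY')
        + t⁻¹ • (hY * P) + t • (hY' * P)
      simp only [mul_add, add_mul, mul_sub, sub_mul, mul_assoc, smul_mul_assoc, mul_smul_comm]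
      match_scalars <;> field_simp <;> ring
    exact sub_eq_zero.mp ((smul_eq_zero_iff_right hs').mp e)
  have next : ∀ m n r : R, P * m - m * P = n → P * n - n * P = r →
      Y * m - m * Y = t • (P * n) - t⁻¹ • (n * P) →
      Y * n - n * Y = t • (P * r) - t⁻¹ • (r * P) := by
    intro m n r hm hn h
    linear_combination (norm := skip) P * h - h * P - Y * hm + hm * Y
      + t • (P * hn) - t⁻¹ • (hn * P) + yP * m - m * yP
    simp only [mul_add, add_mul, mul_sub, sub_mul, mul_assoc, smul_mul_assoc, mul_smul_comm]
    match_scalars <;> field_simp <;> ring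
  have ya := next _ _ _ ha hb yv
  have yb := next _ _ _ hb hc ya
  have yc := next _ _ _ hc hd yb
  have ab := hstep t ht hs P Y v a b c ha hb hc yv ya va
  have bc := hstep t ht hs P Y a b c d hb hc hd ya yb ab
  refine ⟨bc, ?_⟩
  linear_combination (norm := skip) P * ab - ab * P - hb * b - a * hc
      + t⁻¹ • (hc * a) + t⁻¹ • (b * hb)
  simp only [mul_add, add_mul, mul_sub, sub_mul, mul_assoc, smul_mul_assoc, mul_smul_comm]
  match_scalars <;> field_simp <;> ring

theorem hscale (s m k : K) (a b c : R) (h1 : b * c = s • (c * b))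
    (h2 : a * c = s • (c * a) + (s - 1) • (b * b)) :
    ((m ^ 4 * k ^ 2) • b) * ((m ^ 6 * k ^ 3) • c)
      = s • (((m ^ 6 * k ^ 3) • c) * ((m ^ 4 * k ^ 2) • b)) ∧
    ((m ^ 2 * k) • a) * ((m ^ 6 * k ^ 3) • c)
      = s • (((m ^ 6 * k ^ 3) • c) * ((m ^ 2 * k) • a))
        + (s - 1) • (((m ^ 4 * k ^ 2) • b) * ((m ^ 4 * k ^ 2) • b)) := by
  simp only [smul_mul_assoc, mul_smul_comm, h1, h2]
  constructor <;> module

theorem hind (s : K) (x y z : R) (h23 : y * z = s • (z * y))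
    (h13 : x * z = s • (z * x) + (s - 1) • (y * y)) (n : ℕ) :
    x * z ^ (n + 1) = s ^ (n + 1) • (z ^ (n + 1) * x) +
      (s ^ (2 * n + 1) - s ^ n) • (z ^ n * (y * y)) := by
  induction n with
  | zero => simpa using h13
  | succ n ih =>
    have h : y * y * z = s ^ 2 • (z * (y * y)) := by
      rw [mul_assoc, h23, mul_smul_comm, ← mul_assoc, h23, smul_mul_assoc, smul_smul, sq,
        mul_assoc]
    rw [pow_succ z (n + 1), ← mul_assoc, ih, add_mul, smul_mul_assoc, smul_mul_assoc,
      mul_assoc (z ^ (n + 1)), mul_assoc (z ^ n), h, h13, mul_add, mul_smul_comm,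
      mul_smul_comm, mul_smul_comm, ← mul_assoc (z ^ n), ← pow_succ,
      ← mul_assoc (z ^ (n + 1)) z x]
    module

end helper

theorem qq_ne : qq ≠ 0 := RatFunc.X_ne_zero

theorem poly_ne (p : Polynomial ℚ) (hp : p.eval 1 ≠ 0) : Polynomial.aeval qq p ≠ 0 := by
  intro h
  have h2 : Polynomial.aeval qq p = algebraMap (Polynomial ℚ) F p := by
    rw [qq, ← RatFunc.algebraMap_X, Polynomial.aeval_algebraMap_apply, Polynomial.aeval_X_left_apply]
  rw [h2] at h
  have : p = 0 := (map_eq_zero_iff _ (RatFunc.algebraMap_injective ℚ)).mp h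
  simp [this] at hp

theorem ne1 : qq ^ 2 + (qq ^ 2)⁻¹ ≠ 0 := by
  have h := poly_ne (Polynomial.X ^ 4 + 1) (by norm_num)
  have hq := qq_ne
  intro h0
  apply h
  simp only [map_add, map_pow, Polynomial.aeval_X, map_one]
  field_simp at h0
  linear_combination h0

theorem ne2 : 1 + qq ^ 2 + (qq ^ 2)⁻¹ ≠ 0 := by
  have h := poly_ne (Polynomial.X ^ 4 + Polynomial.X ^ 2 + 1) (by norm_num)
  have hq := qq_ne
  intro h0
  apply h
  simp only [map_add, map_pow, Polynomial.aeval_X, map_one]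
  field_simp at h0
  linear_combination h0

theorem serre1 : E1 ^ 3 * E2 - box3 • (E1 ^ 2 * E2 * E1) + box3 • (E1 * E2 * E1 ^ 2)
    - E2 * E1 ^ 3 = 0 := by
  have := RingQuot.mkAlgHom_rel F SerreRel.rel1
  simp only [map_sub, map_add, map_mul, map_pow, map_smul, map_zero] at this
  exact this

theorem serre2 : E2 ^ 3 * E1 - box3 • (E2 ^ 2 * E1 * E2) + box3 • (E2 * E1 * E2 ^ 2)
    - E1 * E2 ^ 3 = 0 := by
  have := RingQuot.mkAlgHom_rel F SerreRel.rel2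
  simp only [map_sub, map_add, map_mul, map_pow, map_smul, map_zero] at this
  exact this

theorem urel : u2 * u3 = (qq ^ 2)⁻¹ • (u3 * u2) ∧
    u1 * u3 = (qq ^ 2)⁻¹ • (u3 * u1) + ((qq ^ 2)⁻¹ - 1) • (u2 * u2) := by
  have hb : box3 = qq ^ 2 + 1 + (qq ^ 2)⁻¹ := by rw [box3, inv_pow]
  have s1 := serre1
  have s2 := serre2
  rw [hb] at s1 s2
  obtain ⟨P, hP⟩ : ∃ P, P = E2 * E1 - (qq ^ 2)⁻¹ • (E1 * E2) := ⟨_, rfl⟩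
  obtain ⟨a, ha⟩ : ∃ a, P * E1 - E1 * P = a := ⟨_, rfl⟩
  obtain ⟨b, hb⟩ : ∃ b, P * a - a * P = b := ⟨_, rfl⟩
  obtain ⟨c, hc⟩ : ∃ c, P * b - b * P = c := ⟨_, rfl⟩
  obtain ⟨h1, h2⟩ := hmain (qq ^ 2) (pow_ne_zero 2 qq_ne) ne1 ne2 E1 E2 P a b c _ hP s1 s2
    ha hb hc rfl
  obtain ⟨k, hk⟩ : ∃ k, k = (qq + qq⁻¹)⁻¹ := ⟨_, rfl⟩
  obtain ⟨m, hm⟩ : ∃ m, m = (1 - (qq⁻¹) ^ 2)⁻¹ := ⟨_, rfl⟩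
  have hA : Aelt = k • P := by rw [Aelt, hP, hk, inv_pow]
  have a1 : v1 = k • a := by
    rw [v1, v0, hA, ← ha, smul_mul_assoc, mul_smul_comm, smul_sub]
  have a2 : v2 = k ^ 2 • b := by
    rw [v2, a1, hA, ← hb]
    simp only [smul_mul_assoc, mul_smul_comm, smul_sub, smul_smul, sq]
  have a3 : v3 = k ^ 3 • c := by
    rw [v3, a2, hA, ← hc]
    simp only [smul_mul_assoc, mul_smul_comm, smul_sub, smul_smul, pow_succ, pow_zero, one_mul,
      mul_assoc]
  have b1 : u1 = (m ^ 2 * k) • a := by rw [u1, a1, smul_smul, hm]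
  have b2 : u2 = (m ^ 4 * k ^ 2) • b := by rw [u2, a2, smul_smul, hm]
  have b3 : u3 = (m ^ 6 * k ^ 3) • c := by rw [u3, a3, smul_smul, hm]
  rw [b1, b2, b3]
  exact hscale _ m k a b c h1 h2

/-- In `U`, for every positive integer `l` one has
`u₁u₃^l = q^{−2l}u₃^l u₁ + (q^{−4l+2} − q^{−2l+2})u₃^{l−1}u₂²`. -/
theorem stmt6 (l : ℕ) (hl : 1 ≤ l) :
    u1 * u3 ^ l =
      qq ^ (-2 * (l : ℤ)) • (u3 ^ l * u1) +
        (qq ^ (-4 * (l : ℤ) + 2) - qq ^ (-2 * (l : ℤ) + 2)) • (u3 ^ (l - 1) * u2 ^ 2) := by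
  obtain ⟨h23, h13⟩ := urel
  have hq := qq_ne
  obtain ⟨n, rfl⟩ : ∃ n, l = n + 1 := ⟨l - 1, by omega⟩
  clear hl
  have key := hind _ u1 u2 u3 h23 h13
  rw [key n]
  have c1 : qq ^ (-2 * ((n + 1 : ℕ) : ℤ)) = ((qq ^ 2)⁻¹) ^ (n + 1) := by
    rw [zpow_mul, zpow_natCast, zpow_neg]; rfl
  have c2 : qq ^ (-2 * ((n + 1 : ℕ) : ℤ) + 2) = ((qq ^ 2)⁻¹) ^ n := by
    rw [show -2 * ((n + 1 : ℕ) : ℤ) + 2 = -2 * (n : ℤ) by push_cast; ring,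
      zpow_mul, zpow_natCast, zpow_neg]; rfl
  have c3 : qq ^ (-4 * ((n + 1 : ℕ) : ℤ) + 2) = ((qq ^ 2)⁻¹) ^ (2 * n + 1) := by
    rw [show -4 * ((n + 1 : ℕ) : ℤ) + 2 = -2 * ((2 * n + 1 : ℕ) : ℤ) by push_cast; ring,
      zpow_mul, zpow_natCast, zpow_neg]; rfl
  rw [c1, c2, c3, sq u2, Nat.add_sub_cancel]
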